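/- Let f : {0,1}^n → ℝ be non-constant, let σ²(f) = E[f²] − (E f)² > 0, and let E(f,f) = E_x Σ_{i=1}^n (f(x) − f(x⊕e_i))². Then the martingale differences d_i of f satisfy Σ_{i=1}^n (E|d_i|)² ≥ σ²(f) · exp( − E(f,f) / (2 σ²(f)) ). -/

import Mathlib

open Finset

/-- Expectation with respect to the uniform measure on the discrete cube `{0,1}^n`. -/
noncomputable def cubeE {n : ℕ} (f : (Fin n → Bool) → ℝ) : ℝ :=
  (∑ x : Fin n → Bool, f x) / 2 ^ n

/-- `x ⊕ e_i` : flip the `i`-th coordinate of `x`. -/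
def flipAt {n : ℕ} (x : Fin n → Bool) (i : Fin n) : Fin n → Bool :=
  Function.update x i (!x i)

/-- Influence of the `i`-th variable of a Boolean function,
`I_i(f) = Pr_x[f(x) ≠ f(x ⊕ e_i)]` under the uniform measure. -/
noncomputable def infl {n : ℕ} (f : (Fin n → Bool) → Bool) (i : Fin n) : ℝ :=
  cubeE (fun x => if f x ≠ f (flipAt x i) then 1 else 0)

/-- Expectation of a Boolean function under the uniform measure. -/
noncomputable def meanB {n : ℕ} (f : (Fin n → Bool) → Bool) : ℝ :=
  cubeE (fun x => if f x then 1 else 0)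

/-- Conditional expectation given the first `j` coordinates: `condE f j x` is the
average of `f` over all `y` agreeing with `x` in the first `j` coordinates. -/
noncomputable def condE {n : ℕ} (f : (Fin n → Bool) → ℝ) (j : ℕ) (x : Fin n → Bool) : ℝ :=
  (∑ y : Fin n → Bool, if ∀ k : Fin n, (k : ℕ) < j → y k = x k then f y else 0) / 2 ^ (n - j)

/-- The Dirichlet form `E(f,f) = E_x Σ_i (f(x) - f(x ⊕ e_i))²`. -/
noncomputable def energy {n : ℕ} (f : (Fin n → Bool) → ℝ) : ℝ :=
  cubeE (fun x => ∑ i : Fin n, (f x - f (flipAt x i)) ^ 2)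

/-- Entropy of a nonnegative function: `Ent(g) = E[g log g] - E g · log E g`
(the convention `0 log 0 = 0` holds since `Real.log 0 = 0`). -/
noncomputable def ent {n : ℕ} (g : (Fin n → Bool) → ℝ) : ℝ :=
  cubeE (fun x => g x * Real.log (g x)) - cubeE g * Real.log (cubeE g)

/-- Slice of `f` at first coordinate `b`. -/
def cslice {n : ℕ} (f : (Fin (n+1) → Bool) → ℝ) (b : Bool) : (Fin n → Bool) → ℝ :=
  fun y => f (Fin.cons b y)

/-- Martingale difference. -/
noncomputable def mdiff {n : ℕ} (f : (Fin n → Bool) → ℝ) (j : ℕ) : (Fin n → Bool) → ℝ :=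
  fun x => condE f (j + 1) x - condE f j x

lemma sum_cube_succ {n : ℕ} (f : (Fin (n+1) → Bool) → ℝ) :
    ∑ x, f x = ∑ y, f (Fin.cons true y) + ∑ y, f (Fin.cons false y) := by
  rw [← (Fin.consEquiv (fun _ : Fin (n+1) => Bool)).sum_comp, Fintype.sum_prod_type]
  simp [Fin.consEquiv]

lemma cubeE_succ {n : ℕ} (f : (Fin (n+1) → Bool) → ℝ) :
    cubeE f = (cubeE (fun y => f (Fin.cons true y)) + cubeE (fun y => f (Fin.cons false y))) / 2 := by
  unfold cubeE
  rw [sum_cube_succ, pow_succ]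
  field_simp

lemma cubeE_add {n : ℕ} (f g : (Fin n → Bool) → ℝ) :
    cubeE (fun x => f x + g x) = cubeE f + cubeE g := by
  simp only [cubeE, Finset.sum_add_distrib, add_div]

lemma cubeE_sub {n : ℕ} (f g : (Fin n → Bool) → ℝ) :
    cubeE (fun x => f x - g x) = cubeE f - cubeE g := by
  simp only [cubeE, Finset.sum_sub_distrib, sub_div]

lemma cubeE_mul {n : ℕ} (c : ℝ) (f : (Fin n → Bool) → ℝ) :
    cubeE (fun x => c * f x) = c * cubeE f := by
  simp only [cubeE, ← Finset.mul_sum, mul_div_assoc]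

lemma cubeE_const {n : ℕ} (c : ℝ) : cubeE (fun _ : Fin n → Bool => c) = c := by
  simp [cubeE]

lemma cubeE_mono {n : ℕ} {f g : (Fin n → Bool) → ℝ} (h : ∀ x, f x ≤ g x) :
    cubeE f ≤ cubeE g := by
  unfold cubeE
  gcongr with x
  exact h x

lemma cubeE_nonneg {n : ℕ} {f : (Fin n → Bool) → ℝ} (h : ∀ x, 0 ≤ f x) : 0 ≤ cubeE f := by
  have := cubeE_mono (f := fun _ => (0:ℝ)) h
  rwa [cubeE_const] at this

lemma cubeE_eq_zero {n : ℕ} {f : (Fin n → Bool) → ℝ} (h : ∀ x, 0 ≤ f x) (h0 : cubeE f = 0) :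
    ∀ x, f x = 0 := by
  unfold cubeE at h0
  rw [div_eq_zero_iff, or_iff_left (by positivity), Finset.sum_eq_zero_iff_of_nonneg
    (fun x _ => h x)] at h0
  exact fun x => h0 x (mem_univ x)

lemma condE_zero {n : ℕ} (f : (Fin n → Bool) → ℝ) (x) : condE f 0 x = cubeE f := by
  simp [condE, cubeE]

lemma condE_succ {n : ℕ} (f : (Fin (n+1) → Bool) → ℝ) (j : ℕ) (b : Bool) (y) :
    condE f (j+1) (Fin.cons b y) = condE (cslice f b) j y := by
  unfold condE cslice
  rw [sum_cube_succ]
  congr 1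
  · cases b <;> simp [Fin.forall_fin_succ]
  · simp

lemma condE_sub {n : ℕ} (f g : (Fin n → Bool) → ℝ) (j : ℕ) (x) :
    condE (fun x => f x - g x) j x = condE f j x - condE g j x := by
  unfold condE
  rw [← sub_div, ← Finset.sum_sub_distrib]
  congr 1
  apply Finset.sum_congr rfl
  intro y _
  split_ifs <;> simp

lemma mdiff_sub {n : ℕ} (f g : (Fin n → Bool) → ℝ) (j : ℕ) (x) :
    mdiff (fun x => f x - g x) j x = mdiff f j x - mdiff g j x := by
  simp only [mdiff, condE_sub]; ring

lemma mdiff_succ {n : ℕ} (f : (Fin (n+1) → Bool) → ℝ) (j : ℕ) (b : Bool) (y) :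
    mdiff f (j+1) (Fin.cons b y) = mdiff (cslice f b) j y := by
  simp only [mdiff, condE_succ]

lemma mdiff_zero {n : ℕ} (f : (Fin (n+1) → Bool) → ℝ) (b : Bool) (y) :
    mdiff f 0 (Fin.cons b y) = cubeE (cslice f b) - cubeE f := by
  simp only [mdiff, condE_succ, condE_zero]

lemma cubeE_slice {n : ℕ} (f : (Fin (n+1) → Bool) → ℝ) :
    cubeE f = (cubeE (cslice f true) + cubeE (cslice f false)) / 2 := cubeE_succ f

lemma sum_var {n : ℕ} (f : (Fin n → Bool) → ℝ) :
    ∑ i : Fin n, cubeE (fun x => mdiff f i x ^ 2) = cubeE (fun x => f x ^ 2) - cubeE f ^ 2 := by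
  induction n with
  | zero => simp [cubeE]
  | succ n ih =>
    rw [Fin.sum_univ_succ]
    simp only [Fin.val_succ, Fin.val_zero]
    simp_rw [cubeE_succ (fun x => mdiff f _ x ^ 2), mdiff_succ, mdiff_zero]
    rw [← Finset.sum_div, Finset.sum_add_distrib, ih, ih, cubeE_const, cubeE_const,
      cubeE_succ (fun x => f x ^ 2), cubeE_slice f]
    simp only [cslice]
    ring

lemma flipAt_zero {n : ℕ} (b : Bool) (y : Fin n → Bool) :
    flipAt (Fin.cons b y : Fin (n+1) → Bool) 0 = Fin.cons (!b) y := by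
  simp [flipAt]

lemma flipAt_succ {n : ℕ} (b : Bool) (y : Fin n → Bool) (i : Fin n) :
    flipAt (Fin.cons b y : Fin (n+1) → Bool) i.succ = Fin.cons b (flipAt y i) := by
  simp [flipAt, Fin.cons_update]

lemma energy_succ {n : ℕ} (f : (Fin (n+1) → Bool) → ℝ) :
    energy f = (energy (cslice f true) + energy (cslice f false)) / 2 +
      cubeE (fun y => (cslice f true y - cslice f false y) ^ 2) := by
  unfold energy
  rw [cubeE_succ]
  simp only [Fin.sum_univ_succ, flipAt_zero, flipAt_succ, cubeE_add, cslice, Bool.not_true,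
    Bool.not_false]
  have : cubeE (fun y : Fin n → Bool => (f (Fin.cons false y) - f (Fin.cons true y)) ^ 2) =
    cubeE (fun y : Fin n → Bool => (f (Fin.cons true y) - f (Fin.cons false y)) ^ 2) := by
    congr 1; ext y; ring
  rw [this]
  ring

lemma energy_const {n : ℕ} (c : ℝ) : energy (fun _ : Fin n → Bool => c) = 0 := by
  simp [energy, cubeE]

lemma sum_energy {n : ℕ} (f : (Fin n → Bool) → ℝ) :
    ∑ i : Fin n, energy (mdiff f i) = energy f := by
  induction n with
  | zero => simp [energy, cubeE]
  | succ n ih =>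
    rw [Fin.sum_univ_succ]
    simp only [Fin.val_succ, Fin.val_zero]
    have h0 : ∀ b, cslice (mdiff f 0) b = fun _ => cubeE (cslice f b) - cubeE f := fun b => by
      ext y; exact mdiff_zero f b y
    have h1 : ∀ b (j : ℕ), cslice (mdiff f (j+1)) b = mdiff (cslice f b) j := fun b j => by
      ext y; exact mdiff_succ f j b y
    simp_rw [energy_succ (mdiff f _), h0, h1]
    simp_rw [energy_const, cubeE_const, ← mdiff_sub]
    rw [Finset.sum_add_distrib, ← Finset.sum_div, Finset.sum_add_distrib, ih, ih, sum_var,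
      energy_succ f, cubeE_sub]
    ring

lemma two_point_aux (t : ℝ) (h0 : 0 ≤ t) (h1 : t ≤ 1) :
    t ^ 2 * Real.log (t ^ 2) - (1 + t ^ 2) * Real.log ((1 + t ^ 2) / 2) - (1 - t) ^ 2 ≤ 0 := by
  set F : ℝ → ℝ := fun t =>
    t ^ 2 * Real.log (t ^ 2) - (1 + t ^ 2) * Real.log ((1 + t ^ 2) / 2) - (1 - t) ^ 2 with hF
  have hc : Continuous F := by
    have e1 : Continuous (fun t : ℝ => t ^ 2 * Real.log (t ^ 2)) :=
      Real.continuous_mul_log.comp (continuous_pow 2)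
    have e2 : Continuous (fun t : ℝ => Real.log ((1 + t ^ 2) / 2)) :=
      Continuous.log (by fun_prop) (fun x => by positivity)
    fun_prop
  have hm : MonotoneOn F (Set.Icc 0 1) := by
    apply monotoneOn_of_hasDerivWithinAt_nonneg (f' := fun t =>
      2 * t * Real.log (t ^ 2) - 2 * t * Real.log ((1 + t ^ 2) / 2) + 2 * (1 - t))
      (convex_Icc 0 1) hc.continuousOn
    · intro x hx
      rw [interior_Icc] at hx
      have hx0 : x ≠ 0 := hx.1.ne'
      have hp : HasDerivAt (fun t : ℝ => t ^ 2) (2 * x) x := by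
        simpa using hasDerivAt_pow 2 x
      have hq : HasDerivAt (fun t : ℝ => 1 + t ^ 2) (2 * x) x := hp.const_add 1
      have hl := hp.log (pow_ne_zero 2 hx0)
      have hr := (hq.div_const 2).log (by positivity)
      have hs : HasDerivAt (fun t : ℝ => (1 - t) ^ 2) (-(2 * (1 - x))) x := by
        have := ((hasDerivAt_id x).const_sub 1).pow 2
        refine HasDerivAt.congr_deriv this ?_
        norm_num
      have := ((hp.mul hl).sub (hq.mul hr)).sub hs
      apply HasDerivAt.hasDerivWithinAt
      refine HasDerivAt.congr_deriv this ?_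
      field_simp
      ring
    · intro x hx
      rw [interior_Icc] at hx
      obtain ⟨hx0, hx1⟩ := hx
      have hv : 0 ≤ 1 / x - 1 := by
        rw [sub_nonneg, le_div_iff₀ hx0]; linarith
      have hexp := Real.quadratic_le_exp_of_nonneg hv
      have hlog : Real.log ((1 + x ^ 2) / 2 / x ^ 2) ≤ 1 / x - 1 := by
        rw [Real.log_le_iff_le_exp (by positivity)]
        refine le_trans (le_of_eq ?_) hexp
        field_simp
        ring
      rw [Real.log_div (by positivity) (by positivity)] at hlog
      have := mul_le_mul_of_nonneg_left hlog (by positivity : 0 ≤ 2 * x)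
      have e : 2 * x * (1 / x - 1) = 2 * (1 - x) := by field_simp
      rw [e] at this
      linarith
  have := hm (Set.mem_Icc.2 ⟨h0, h1⟩) (Set.right_mem_Icc.2 zero_le_one) h1
  have e : F 1 = 0 := by simp [hF]
  rw [e] at this
  exact this

lemma two_point_le (a b : ℝ) (hb : 0 ≤ b) (hab : b ≤ a) :
    (a ^ 2 * Real.log (a ^ 2) + b ^ 2 * Real.log (b ^ 2)) / 2 -
      (a ^ 2 + b ^ 2) / 2 * Real.log ((a ^ 2 + b ^ 2) / 2) ≤ (a - b) ^ 2 / 2 := by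
  rcases (hb.trans hab).eq_or_lt with h | ha
  · have hb0 : b = 0 := by linarith
    subst hb0; subst h; simp
  obtain ⟨t, rfl⟩ : ∃ t, b = a * t := ⟨b / a, by field_simp⟩
  have ht0 : 0 ≤ t := by
    by_contra hh
    nlinarith
  have ht1 : t ≤ 1 := by
    by_contra hh
    nlinarith
  have key := two_point_aux t ht0 ht1
  have e1 : (a ^ 2 + (a * t) ^ 2) / 2 = a ^ 2 * ((1 + t ^ 2) / 2) := by ring
  rw [e1, Real.log_mul (by positivity) (by positivity)]
  rcases ht0.eq_or_lt with h | ht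
  · subst h
    simp at key ⊢
    nlinarith [sq_nonneg a]
  · rw [mul_pow, Real.log_mul (by positivity) (by positivity)]
    have := mul_le_mul_of_nonneg_left key (by positivity : 0 ≤ a ^ 2 / 2)
    linear_combination this

lemma two_point (a b : ℝ) (ha : 0 ≤ a) (hb : 0 ≤ b) :
    (a ^ 2 * Real.log (a ^ 2) + b ^ 2 * Real.log (b ^ 2)) / 2 -
      (a ^ 2 + b ^ 2) / 2 * Real.log ((a ^ 2 + b ^ 2) / 2) ≤ (a - b) ^ 2 / 2 := by
  rcases le_total b a with h | h
  · exact two_point_le a b hb h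
  · have := two_point_le b a ha h
    rw [add_comm (b ^ 2) (a ^ 2)] at this
    linear_combination this

lemma cubeE_cs {n : ℕ} (f g : (Fin n → Bool) → ℝ) :
    cubeE (fun x => f x * g x) ≤
      Real.sqrt (cubeE (fun x => f x ^ 2)) * Real.sqrt (cubeE (fun x => g x ^ 2)) := by
  rw [← Real.sqrt_mul (cubeE_nonneg fun x => sq_nonneg _)]
  apply Real.le_sqrt_of_sq_le
  unfold cubeE
  rw [div_pow, div_mul_div_comm, ← sq]
  gcongr
  exact Finset.sum_mul_sq_le_sq_mul_sq _ _ _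

lemma minkowski {n : ℕ} (f g : (Fin n → Bool) → ℝ) :
    (Real.sqrt (cubeE (fun x => f x ^ 2)) - Real.sqrt (cubeE (fun x => g x ^ 2))) ^ 2 ≤
      cubeE (fun x => (f x - g x) ^ 2) := by
  have e : cubeE (fun x => (f x - g x) ^ 2) = cubeE (fun x => f x ^ 2) + cubeE (fun x => g x ^ 2)
      - 2 * cubeE (fun x => f x * g x) := by
    rw [← cubeE_mul, ← cubeE_add, ← cubeE_sub]
    congr 1; ext x; ring
  have h1 := Real.sq_sqrt (cubeE_nonneg (f := fun x => f x ^ 2) fun x => sq_nonneg _)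
  have h2 := Real.sq_sqrt (cubeE_nonneg (f := fun x => g x ^ 2) fun x => sq_nonneg _)
  have := cubeE_cs f g
  rw [e]
  nlinarith

lemma log_sobolev {n : ℕ} (g : (Fin n → Bool) → ℝ) :
    ent (fun x => g x ^ 2) ≤ energy g / 2 := by
  induction n with
  | zero => simp [ent, energy, cubeE]
  | succ n ih =>
    have i1 := ih (cslice g true)
    have i0 := ih (cslice g false)
    have m := minkowski (cslice g true) (cslice g false)
    have tp := two_point _ _ (Real.sqrt_nonneg (cubeE (fun x => cslice g true x ^ 2)))
      (Real.sqrt_nonneg (cubeE (fun x => cslice g false x ^ 2)))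
    rw [Real.sq_sqrt (cubeE_nonneg fun x => sq_nonneg _),
      Real.sq_sqrt (cubeE_nonneg fun x => sq_nonneg _)] at tp
    rw [energy_succ]
    unfold ent at *
    rw [cubeE_succ (fun x => g x ^ 2 * Real.log (g x ^ 2)), cubeE_succ (fun x => g x ^ 2)]
    simp only [cslice] at *
    linarith

lemma ent_lower {n : ℕ} (g : (Fin n → Bool) → ℝ) (c : ℝ) (hc : 0 < c) :
    cubeE (fun x => g x ^ 2) * Real.log c + cubeE (fun x => g x ^ 2)
      - c * cubeE (fun x => |g x|) ^ 2 ≤ ent (fun x => g x ^ 2) := by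
  have hA0 : 0 ≤ cubeE (fun x => g x ^ 2) := cubeE_nonneg fun x => sq_nonneg _
  have hm0 : 0 ≤ cubeE (fun x => |g x|) := cubeE_nonneg fun x => abs_nonneg _
  rcases hA0.eq_or_lt with h | hA
  · have hz := cubeE_eq_zero (fun x => sq_nonneg (g x)) h.symm
    have hz' : ∀ x, g x = 0 := fun x => by simpa using hz x
    simp [ent, hz', cubeE]
  have hm : 0 < cubeE (fun x => |g x|) := by
    rcases hm0.eq_or_lt with h | h
    · have hz := cubeE_eq_zero (fun x => abs_nonneg (g x)) h.symm
      have hz' : ∀ x, g x = 0 := fun x => by simpa using hz x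
      simp [hz', cubeE] at hA
    · exact h
  unfold ent
  generalize hAd : cubeE (fun x => g x ^ 2) = A at *
  generalize hmd : cubeE (fun x => |g x|) = m at *
  have hpt : ∀ x, (2 * Real.log (A / m) + 2) * g x ^ 2 - (2 * (A / m)) * |g x| ≤
      g x ^ 2 * Real.log (g x ^ 2) := by
    intro x
    rcases (abs_nonneg (g x)).eq_or_lt with h | h
    · have : g x = 0 := by simpa using h.symm
      simp [this]
    · rw [← sq_abs (g x), Real.log_pow]
      generalize |g x| = u at *
      have := Real.one_sub_inv_le_log_of_pos (x := u / (A / m)) (by positivity)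
      rw [Real.log_div h.ne' (by positivity)] at this
      have h2 := mul_le_mul_of_nonneg_left this (by positivity : 0 ≤ 2 * u ^ 2)
      have e : 2 * u ^ 2 * (1 - (u / (A / m))⁻¹) = 2 * u ^ 2 - 2 * (A / m) * u := by
        field_simp
      rw [e] at h2
      push_cast
      linarith
  have hE := cubeE_mono hpt
  rw [cubeE_sub, cubeE_mul, cubeE_mul, hAd, hmd] at hE
  have e1 : 2 * (A / m) * m = 2 * A := by field_simp
  rw [e1, Real.log_div hA.ne' hm.ne'] at hE
  have h3 := Real.one_sub_inv_le_log_of_pos (x := A / (m ^ 2 * c)) (by positivity)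
  rw [Real.log_div hA.ne' (by positivity), Real.log_mul (by positivity) hc.ne', Real.log_pow] at h3
  have h4 := mul_le_mul_of_nonneg_left h3 hA.le
  have e2 : A * (1 - (A / (m ^ 2 * c))⁻¹) = A - c * m ^ 2 := by field_simp
  rw [e2] at h4
  push_cast at h4
  linarith

/-- **Main theorem** (uniform measure): for a non-constant `f : {0,1}^n → ℝ` with
variance `σ²(f) = E[f²] - (E f)² > 0` and Dirichlet form `E(f,f)`, the martingale
differences `d_i = f_i - f_{i-1}` satisfy
`Σ_i (E|d_i|)² ≥ σ²(f) · exp(-E(f,f)/(2σ²(f)))`. -/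
theorem martingale_difference_lower_bound {n : ℕ} (f : (Fin n → Bool) → ℝ)
    (hnc : ∃ x y, f x ≠ f y)
    (hσ : 0 < cubeE (fun x => f x ^ 2) - (cubeE f) ^ 2) :
    ∑ i : Fin n, (cubeE (fun x => |condE f ((i : ℕ) + 1) x - condE f (i : ℕ) x|)) ^ 2 ≥
      (cubeE (fun x => f x ^ 2) - (cubeE f) ^ 2) *
        Real.exp (-(energy f) / (2 * (cubeE (fun x => f x ^ 2) - (cubeE f) ^ 2))) := by
  have hV := sum_var f
  have hEn := sum_energy f
  generalize cubeE (fun x => f x ^ 2) - (cubeE f) ^ 2 = A at *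
  generalize energy f = N at *
  change ∑ i : Fin n, (cubeE (fun x => |mdiff f i x|)) ^ 2 ≥ _
  have hc := Real.exp_pos (N / (2 * A))
  have h : ∀ i : Fin n, cubeE (fun x => mdiff f i x ^ 2) * (N / (2 * A) + 1)
      - Real.exp (N / (2 * A)) * cubeE (fun x => |mdiff f i x|) ^ 2 ≤ energy (mdiff f i) / 2 := by
    intro i
    have h1 := ent_lower (mdiff f i) _ hc
    have h2 := log_sobolev (mdiff f i)
    rw [Real.log_exp] at h1
    linarith
  have hs := Finset.sum_le_sum (fun i (_ : i ∈ Finset.univ) => h i)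
  rw [Finset.sum_sub_distrib, ← Finset.sum_mul, ← Finset.mul_sum, ← Finset.sum_div, hV, hEn] at hs
  have e : A * (N / (2 * A) + 1) = N / 2 + A := by field_simp
  rw [e] at hs
  rw [neg_div, Real.exp_neg, ge_iff_le, ← div_eq_mul_inv, div_le_iff₀ hc]
  linarith
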